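/- The action of GL(k,ℂ) on nondegenerate integrable S⁴-configurations is free: if (a₁, a₂, b, c) is an integrable (a₁a₂ − a₂a₁ + bc = 0) and nondegenerate S⁴-configuration and g ∈ GL(k,ℂ) satisfies ga₁g⁻¹ = a₁, ga₂g⁻¹ = a₂, gb = b and cg⁻¹ = c, then g = 1. -/

import Mathlib

open Matrix

/-- The monad map `A(x)` of an `S⁴`-configuration `(a₁, a₂, b, c)`. -/
noncomputable def monadA {k n : ℕ} (a₁ a₂ : Matrix (Fin k) (Fin k) ℂ)
    (c : Matrix (Fin n) (Fin k) ℂ) (x : ℂ × ℂ × ℂ) :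
    Matrix ((Fin k ⊕ Fin k) ⊕ Fin n) (Fin k) ℂ :=
  Matrix.fromRows
    (Matrix.fromRows (x.1 • (1 : Matrix (Fin k) (Fin k) ℂ) - x.2.2 • a₁)
      (x.2.1 • (1 : Matrix (Fin k) (Fin k) ℂ) - x.2.2 • a₂))
    (x.2.2 • c)

/-- The monad map `B(x)` of an `S⁴`-configuration `(a₁, a₂, b, c)`. -/
noncomputable def monadB {k n : ℕ} (a₁ a₂ : Matrix (Fin k) (Fin k) ℂ)
    (b : Matrix (Fin k) (Fin n) ℂ) (x : ℂ × ℂ × ℂ) :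
    Matrix (Fin k) ((Fin k ⊕ Fin k) ⊕ Fin n) ℂ :=
  Matrix.fromCols
    (Matrix.fromCols (-(x.2.1 • (1 : Matrix (Fin k) (Fin k) ℂ)) + x.2.2 • a₂)
      (x.1 • (1 : Matrix (Fin k) (Fin k) ℂ) - x.2.2 • a₁))
    (x.2.2 • b)

/-! An element `g` of the stabilizer commutes with `a₁` and `a₂` and satisfies `c (g - 1) = 0`, so
the range of `g - 1` is a subspace of `ker c` invariant under `a₁` and `a₂`. Integrability makes
`a₁` and `a₂` commute on `ker c`, so if this range were nonzero it would contain a common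
eigenvector `a₁ v = x v`, `a₂ v = y v`. Then `A(x, y, 1) v = 0`, contradicting nondegeneracy. -/

section LinearMap

open Module.End

theorem range_mem_invtSubmodule_of_commute {R V : Type*} [Semiring R] [AddCommMonoid V]
    [Module R V] {f g : Module.End R V} (h : Commute f g) :
    LinearMap.range f ∈ g.invtSubmodule := by
  rintro _ ⟨v, rfl⟩
  exact ⟨g v, LinearMap.congr_fun h v⟩

/-- Costability of the ADHM data `(a₁, a₂, c)`: the only subspace of `ker c` invariant under `a₁`
and `a₂` is zero. It forces the stabilizer of the configuration to be trivial. -/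
def IsCostable {R V W : Type*} [Semiring R] [AddCommMonoid V] [Module R V] [AddCommMonoid W]
    [Module R W] (a₁ a₂ : Module.End R V) (c : V →ₗ[R] W) : Prop :=
  ∀ S : Submodule R V, S ∈ a₁.invtSubmodule → S ∈ a₂.invtSubmodule → S ≤ LinearMap.ker c → S = ⊥

theorem IsCostable.eq_one_of_commute {R V W : Type*} [Ring R] [AddCommGroup V] [Module R V]
    [AddCommMonoid W] [Module R W] {a₁ a₂ g : Module.End R V} {c : V →ₗ[R] W}
    (hc : IsCostable a₁ a₂ c) (h₁ : Commute g a₁) (h₂ : Commute g a₂) (hcg : c ∘ₗ g = c) :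
    g = 1 := by
  have hker : LinearMap.range (g - 1) ≤ LinearMap.ker c := by
    rintro _ ⟨v, rfl⟩
    have hcv : c (g v) = c v := LinearMap.congr_fun hcg v
    calc c (g v - v) = c v + c (-v) := by rw [sub_eq_add_neg, map_add, hcv]
      _ = 0 := by rw [← map_add, add_neg_cancel, map_zero]
  have hrange : LinearMap.range (g - 1) = ⊥ :=
    hc _ (range_mem_invtSubmodule_of_commute (h₁.sub_left (Commute.one_left a₁)))
      (range_mem_invtSubmodule_of_commute (h₂.sub_left (Commute.one_left a₂))) hker
  exact sub_eq_zero.1 (LinearMap.range_eq_bot.1 hrange)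

theorem hasEigenvector_of_restrict {R V : Type*} [CommRing R] [AddCommGroup V] [Module R V]
    {f : Module.End R V} {S : Submodule R V} {hf : ∀ v ∈ S, f v ∈ S} {x : R} {v : S}
    (hv : HasEigenvector (f.restrict hf) x v) : f.HasEigenvector x v :=
  ⟨eigenspace_restrict_le_eigenspace f hf x (Submodule.mem_map_of_mem hv.1),
    fun h0 => hv.2 (Subtype.ext h0)⟩

variable {K V W : Type*} [Field K] [IsAlgClosed K] [AddCommGroup V] [Module K V]
  [FiniteDimensional K V]

theorem exists_common_hasEigenvector_of_commute [Nontrivial V] {f g : Module.End K V}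
    (h : Commute f g) : ∃ x y v, f.HasEigenvector x v ∧ g.HasEigenvector y v := by
  obtain ⟨x, hx⟩ := exists_eigenvalue f
  have : Nontrivial (f.eigenspace x) := Submodule.nontrivial_iff_ne_bot.2 hx
  obtain ⟨y, hy⟩ := exists_eigenvalue (g.restrict (mapsTo_genEigenspace_of_comm h x 1))
  obtain ⟨v, hv⟩ := hy.exists_hasEigenvector
  have hgv : g.HasEigenvector y v := hasEigenvector_of_restrict hv
  exact ⟨x, y, v, ⟨v.2, hgv.2⟩, hgv⟩

theorem exists_common_hasEigenvector_mem {f g : Module.End K V} {S : Submodule K V}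
    (hS : S ≠ ⊥) (hf : S ∈ f.invtSubmodule) (hg : S ∈ g.invtSubmodule)
    (hcomm : ∀ v ∈ S, f (g v) = g (f v)) :
    ∃ x y, ∃ v ∈ S, f.HasEigenvector x v ∧ g.HasEigenvector y v := by
  have : Nontrivial S := Submodule.nontrivial_iff_ne_bot.2 hS
  have hres : Commute (f.restrict hf) (g.restrict hg) :=
    LinearMap.ext fun v => Subtype.ext (hcomm v v.2)
  obtain ⟨x, y, v, hx, hy⟩ := exists_common_hasEigenvector_of_commute hres
  exact ⟨x, y, v, v.2, hasEigenvector_of_restrict hx, hasEigenvector_of_restrict hy⟩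

theorem isCostable_of_forall_hasEigenvector [AddCommMonoid W] [Module K W]
    {a₁ a₂ : Module.End K V} {c : V →ₗ[K] W}
    (hcomm : ∀ v, c v = 0 → a₁ (a₂ v) = a₂ (a₁ v))
    (heig : ∀ x y v, a₁.HasEigenvector x v → a₂.HasEigenvector y v → c v ≠ 0) :
    IsCostable a₁ a₂ c := by
  intro S h₁ h₂ hS
  by_contra hne
  obtain ⟨x, y, v, hv, hx, hy⟩ :=
    exists_common_hasEigenvector_mem hne h₁ h₂ fun v hv => hcomm v (hS hv)
  exact heig x y v hx hy (hS hv)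

end LinearMap

theorem isCostable_toLin' {K ι κ : Type*} [Field K] [IsAlgClosed K] [Fintype ι] [DecidableEq ι]
    [Fintype κ] {a₁ a₂ : Matrix ι ι K} {b : Matrix ι κ K} {c : Matrix κ ι K}
    (hint : a₁ * a₂ - a₂ * a₁ + b * c = 0)
    (hinj : ∀ x y : K,
      Function.Injective (fromRows (fromRows (x • 1 - a₁) (y • 1 - a₂)) c).mulVec) :
    IsCostable (toLin' a₁) (toLin' a₂) (toLin' c) := by
  apply isCostable_of_forall_hasEigenvector
  · intro v hv
    have hint_v : (a₁ * a₂ - a₂ * a₁ + b * c) *ᵥ v = 0 := by rw [hint, zero_mulVec]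
    rw [toLin'_apply] at hv
    simpa only [toLin'_apply, add_mulVec, sub_mulVec, ← mulVec_mulVec, hv, mulVec_zero, add_zero,
      sub_eq_zero] using hint_v
  · intro x y v hx hy hv
    apply hx.2
    apply hinj x y
    have h₁ : a₁ *ᵥ v = x • v := hx.apply_eq_smul
    have h₂ : a₂ *ᵥ v = y • v := hy.apply_eq_smul
    rw [toLin'_apply] at hv
    simp only [fromRows_mulVec, sub_mulVec, smul_mulVec, one_mulVec, h₁, h₂, hv, sub_self,
      mulVec_zero, Sum.elim_zero_zero]

theorem s4_action_free_general {K ι κ : Type*} [Field K] [IsAlgClosed K] [Fintype ι]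
    [DecidableEq ι] [Fintype κ] {a₁ a₂ g : Matrix ι ι K} {b : Matrix ι κ K} {c : Matrix κ ι K}
    (hint : a₁ * a₂ - a₂ * a₁ + b * c = 0)
    (hinj : ∀ x y : K,
      Function.Injective (fromRows (fromRows (x • 1 - a₁) (y • 1 - a₂)) c).mulVec)
    (h₁ : Commute g a₁) (h₂ : Commute g a₂) (hc : c * g = c) :
    g = 1 := by
  have hlin : toLin' g = 1 :=
    (isCostable_toLin' hint hinj).eq_one_of_commute (h₁.map toLinAlgEquiv')
      (h₂.map toLinAlgEquiv') (by rw [← toLin'_mul, hc])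
  exact toLin'.injective (hlin.trans toLin'_one.symm)

/-- The action of `GL(k,ℂ)` on nondegenerate integrable `S⁴`-configurations is free:
if `(a₁, a₂, b, c)` is integrable and nondegenerate and `g ∈ GL(k,ℂ)` fixes it, then
`g = 1`. -/
theorem s4_action_free {k n : ℕ}
    (a₁ a₂ : Matrix (Fin k) (Fin k) ℂ)
    (b : Matrix (Fin k) (Fin n) ℂ) (c : Matrix (Fin n) (Fin k) ℂ)
    (hint : a₁ * a₂ - a₂ * a₁ + b * c = 0)
    (hnd : ∀ x : ℂ × ℂ × ℂ, x ≠ 0 →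
      Function.Injective (monadA a₁ a₂ c x).mulVec ∧
      Function.Surjective (monadB a₁ a₂ b x).mulVec)
    (g : Matrix (Fin k) (Fin k) ℂ) (hg : IsUnit g)
    (h1 : g * a₁ * g⁻¹ = a₁) (h2 : g * a₂ * g⁻¹ = a₂)
    (h3 : g * b = b) (h4 : c * g⁻¹ = c) :
    g = 1 := by
  have := hg.invertible
  exact s4_action_free_general hint
    (fun x y => by simpa only [monadA, one_smul] using (hnd (x, y, 1) (by simp)).1)
    ((mul_inv_eq_iff_eq_mul_of_invertible g _ _).1 h1)
    ((mul_inv_eq_iff_eq_mul_of_invertible g _ _).1 h2)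
    ((mul_inv_eq_iff_eq_mul_of_invertible g _ _).1 h4).symm
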